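/- Let (A, m, k) be a regular local ring of dimension d and let M be a nonzero finitely generated A-module of finite length (i.e., supported only at the maximal ideal). Then Tor_d^A(M, k) ≠ 0. -/

import Mathlib

open CategoryTheory Limits

/-!
A regular system of parameters `rs` of `A` is a regular sequence, so `k = A/(rs)` has projective
dimension `d` and `Tor_{d+1}(-, k)` vanishes. Hence `Tor_d(-, k)` preserves monomorphisms, and
since `M` has a submodule isomorphic to `k`, it suffices that `Tor_d(k, k) ≠ 0`. Killing one
element `r` of `rs` at a time raises the degree of a nonvanishing `Tor_n(X, k)` by one: `r` acts
as zero on `k`, hence on `Tor_n(X, k)`, and if `Tor_{n+1}(X/rX, k)` were zero this action would be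
injective.

That `rs` is a regular sequence rests on `A` being a domain, which is proved by induction on `d`:
each member of a regular system of parameters generates a prime ideal, and a noetherian local ring
in which some `(x)` is prime but not minimal is a domain. If `r` and `s` belong to a regular
system of parameters, such an `x` is found among the infinitely many `r + s ^ n`, because only
finitely many primes are minimal and a prime containing two of these elements contains `s`.
-/

universe u

section RegularLocalRing

open IsLocalRing RingTheory.Sequence

lemma ringKrullDim_le_length_of_ofList_eq_maximalIdeal {R : Type*} [CommRing R]
    [IsNoetherianRing R] [IsLocalRing R] {rs : List R} (h : Ideal.ofList rs = maximalIdeal R) :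
    ringKrullDim R ≤ rs.length := by
  classical
  have hspan : (maximalIdeal R).spanFinrank ≤ rs.length := by
    rw [← h, Ideal.ofList, ← List.coe_toFinset]
    exact (Submodule.spanFinrank_span_le_ncard_of_finite (Finset.finite_toSet _)).trans
      ((Set.ncard_coe_finset _).trans_le rs.toFinset_card_le)
  exact (ringKrullDim_le_spanFinrank_maximalIdeal R).trans (mod_cast hspan)

/-- A regular system of parameters of a local ring: a list of generators of the maximal ideal that
is no longer than the Krull dimension. A noetherian local ring is regular if and only if it has
one. -/
structure IsRegularSystemOfParameters {R : Type*} [CommRing R] [IsLocalRing R]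
    (rs : List R) : Prop where
  ofList_eq : Ideal.ofList rs = maximalIdeal R
  length_le : (rs.length : WithBot ℕ∞) ≤ ringKrullDim R

lemma eq_bot_of_isPrime_of_lt_span_singleton {R : Type*} [CommRing R] {x : R} {p : Ideal R}
    [p.IsPrime] (hfg : p.FG) (hx : x ∈ Ideal.jacobson (⊥ : Ideal R))
    (hlt : p < Ideal.span {x}) : p = ⊥ := by
  have hxp : x ∉ p := fun hxp ↦ hlt.not_ge ((Ideal.span_singleton_le_iff_mem p).2 hxp)
  refine Submodule.eq_bot_of_le_smul_of_le_jacobson_bot (Ideal.span {x}) p hfg (fun y hy ↦ ?_) ?_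
  · obtain ⟨z, rfl⟩ := Ideal.mem_span_singleton'.1 (hlt.le hy)
    have hz : z ∈ p := (Ideal.IsPrime.mem_or_mem ‹_› hy).resolve_right hxp
    rw [mul_comm]
    exact Submodule.smul_mem_smul (Ideal.mem_span_singleton_self x) hz
  · rwa [Ideal.span_singleton_le_iff_mem]

lemma isDomain_of_span_singleton_notMem_minimalPrimes {R : Type*} [CommRing R]
    [IsNoetherianRing R] {x : R} (hx : x ∈ Ideal.jacobson (⊥ : Ideal R))
    (hprime : (Ideal.span {x}).IsPrime) (hmin : Ideal.span {x} ∉ minimalPrimes R) : IsDomain R := by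
  obtain ⟨p, hp, hle⟩ := Ideal.exists_minimalPrimes_le (bot_le : ⊥ ≤ Ideal.span {x})
  have : p.IsPrime := hp.1.1
  have hlt : p < Ideal.span {x} := hle.lt_of_ne fun h ↦ hmin (h ▸ hp)
  obtain rfl := eq_bot_of_isPrime_of_lt_span_singleton (IsNoetherian.noetherian p) hx hlt
  exact IsDomain.of_bot_isPrime R

lemma mem_of_add_mul_pow_mem {R : Type*} [CommRing R] [IsLocalRing R] {r s : R}
    (hs : s ∈ maximalIdeal R) {p : Ideal R} [p.IsPrime] {m n : ℕ} (hmn : m < n)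
    (hm : r + s * s ^ m ∈ p) (hn : r + s * s ^ n ∈ p) : s ∈ p := by
  obtain ⟨k, rfl⟩ := Nat.exists_eq_add_of_lt hmn
  have hunit : IsUnit (1 - s ^ (k + 1)) :=
    (isUnit_or_isUnit_one_sub_self _).resolve_left
      fun h ↦ (mem_maximalIdeal s).1 hs ((isUnit_pow_iff k.succ_ne_zero).1 h)
  refine Ideal.IsPrime.mem_of_pow_mem ‹_› (m + 1) ((Ideal.mul_unit_mem_iff_mem p hunit).1 ?_)
  convert p.sub_mem hm hn using 1
  ring

namespace IsRegularSystemOfParameters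

variable {R : Type*} [CommRing R] [IsLocalRing R] {r s : R} {rs : List R}

lemma mem_maximalIdeal (h : IsRegularSystemOfParameters rs) (hr : r ∈ rs) : r ∈ maximalIdeal R :=
  h.ofList_eq ▸ Ideal.subset_span hr

lemma isLocalRing_quotient (h : IsRegularSystemOfParameters (r :: rs)) :
    IsLocalRing (R ⧸ Ideal.span {r}) := by
  have hle : Ideal.span {r} ≤ maximalIdeal R :=
    (Ideal.span_singleton_le_iff_mem _).2 (h.mem_maximalIdeal List.mem_cons_self)
  have : Nontrivial (R ⧸ Ideal.span {r}) :=
    Ideal.Quotient.nontrivial_iff.2 (ne_top_of_le_ne_top Ideal.IsPrime.ne_top' hle)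
  exact .of_surjective' _ Ideal.Quotient.mk_surjective

lemma quotient [IsNoetherianRing R] [IsLocalRing (R ⧸ Ideal.span {r})]
    (h : IsRegularSystemOfParameters (r :: rs)) :
    IsRegularSystemOfParameters (rs.map (Ideal.Quotient.mk (Ideal.span {r}))) where
  ofList_eq := by
    rw [← map_maximalIdeal_of_surjective _ Ideal.Quotient.mk_surjective, ← h.ofList_eq,
      Ideal.ofList_cons, Ideal.map_sup, Ideal.map_quotient_self, bot_sup_eq, Ideal.map_ofList]
  length_le := by
    rw [List.length_map, ← ENat.WithBot.add_le_add_one_right_iff]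
    calc (rs.length : WithBot ℕ∞) + 1 ≤ ringKrullDim R := mod_cast h.length_le
      _ = (maximalIdeal R).height := maximalIdeal_height_eq_ringKrullDim.symm
      _ ≤ ringKrullDim (R ⧸ Ideal.span {r}) + 1 :=
        Ideal.height_le_ringKrullDim_quotient_add_one (h.mem_maximalIdeal List.mem_cons_self)

lemma of_perm {rs' : List R} (h : IsRegularSystemOfParameters rs) (hp : rs.Perm rs') :
    IsRegularSystemOfParameters rs' where
  ofList_eq := by
    rw [← h.ofList_eq, Ideal.ofList, Ideal.ofList]
    simp only [hp.mem_iff]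
  length_le := hp.length_eq ▸ h.length_le

lemma add_mul_cons_cons (h : IsRegularSystemOfParameters (r :: s :: rs)) (t : R) :
    IsRegularSystemOfParameters ((r + s * t) :: s :: rs) where
  ofList_eq := by
    have hpair : Ideal.span {r + s * t} ⊔ Ideal.span {s} = Ideal.span {r} ⊔ Ideal.span {s} := by
      simpa only [Ideal.span_insert] using Ideal.span_pair_add_right_mul (x := r) (y := s) (z := t)
    rw [← h.ofList_eq]
    simp only [Ideal.ofList_cons, ← sup_assoc, hpair]
  length_le := h.length_le

lemma span_singleton_notMem_minimalPrimes (h : IsRegularSystemOfParameters [r]) :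
    Ideal.span {r} ∉ minimalPrimes R := by
  have hr : Ideal.span {r} = maximalIdeal R := by rw [← h.ofList_eq, Ideal.ofList_singleton]
  intro hmin
  have hdim := h.length_le
  rw [← maximalIdeal_height_eq_ringKrullDim, Ideal.height_eq_zero_iff.2 (hr ▸ hmin)] at hdim
  exact absurd (Nat.cast_le.1 hdim) (Nat.not_succ_le_zero _)

variable [IsNoetherianRing R]

lemma notMem_ofList_tail (h : IsRegularSystemOfParameters (r :: rs)) : r ∉ Ideal.ofList rs := by
  intro hr
  have hrs : Ideal.ofList rs = maximalIdeal R := by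
    rw [← h.ofList_eq, Ideal.ofList_cons, right_eq_sup, Ideal.span_singleton_le_iff_mem]
    exact hr
  have hlen : ((rs.length + 1 : ℕ) : WithBot ℕ∞) ≤ rs.length :=
    h.length_le.trans (ringKrullDim_le_length_of_ofList_eq_maximalIdeal hrs)
  exact absurd (Nat.cast_le.1 hlen) (Nat.not_succ_le_self _)

lemma ne_zero (h : IsRegularSystemOfParameters (r :: rs)) : r ≠ 0 := by
  rintro rfl
  exact h.notMem_ofList_tail (zero_mem _)

lemma exists_span_add_mul_notMem_minimalPrimes
    (h : IsRegularSystemOfParameters (r :: s :: rs)) :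
    ∃ t, Ideal.span {r + s * t} ∉ minimalPrimes R := by
  by_contra! hmin
  obtain ⟨m, n, hmn, heq⟩ :=
    (minimalPrimes.finite_of_isNoetherianRing R).exists_lt_map_eq_of_forall_mem
      (f := fun n : ℕ ↦ Ideal.span {r + s * s ^ n}) fun n ↦ hmin (s ^ n)
  have : (Ideal.span {r + s * s ^ m}).IsPrime := (hmin (s ^ m)).1.1
  have hs : s ∈ Ideal.span {r + s * s ^ m} := by
    refine mem_of_add_mul_pow_mem (h.mem_maximalIdeal (by simp)) hmn
      (Ideal.mem_span_singleton_self _) ?_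
    exact heq ▸ Ideal.mem_span_singleton_self _
  refine ((h.add_mul_cons_cons (s ^ m)).of_perm (.swap _ _ _)).notMem_ofList_tail ?_
  rw [Ideal.ofList_cons]
  exact Ideal.mem_sup_left hs

lemma exists_cons_span_singleton_notMem_minimalPrimes
    (h : IsRegularSystemOfParameters (r :: rs)) :
    ∃ x xs, IsRegularSystemOfParameters (x :: xs) ∧ xs.length = rs.length ∧
      Ideal.span {x} ∉ minimalPrimes R := by
  cases rs with
  | nil => exact ⟨r, [], h, rfl, h.span_singleton_notMem_minimalPrimes⟩
  | cons s rs =>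
    obtain ⟨t, ht⟩ := h.exists_span_add_mul_notMem_minimalPrimes
    exact ⟨r + s * t, s :: rs, h.add_mul_cons_cons t, rfl, ht⟩

lemma isDomain (h : IsRegularSystemOfParameters rs) : IsDomain R := by
  induction hlen : rs.length generalizing R rs with
  | zero =>
    obtain rfl := List.eq_nil_of_length_eq_zero hlen
    have hbot : maximalIdeal R = ⊥ := by rw [← h.ofList_eq, Ideal.ofList_nil]
    exact (isField_iff_maximalIdeal_eq.2 hbot).isDomain
  | succ d ih =>
    obtain ⟨r, rs, rfl⟩ := List.exists_cons_of_length_eq_add_one hlen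
    obtain ⟨x, xs, hxs, hlen', hmin⟩ := h.exists_cons_span_singleton_notMem_minimalPrimes
    have := hxs.isLocalRing_quotient
    have : IsDomain (R ⧸ Ideal.span {x}) :=
      ih hxs.quotient (by rw [List.length_map, hlen', Nat.succ.inj hlen])
    exact isDomain_of_span_singleton_notMem_minimalPrimes
      ((jacobson_eq_maximalIdeal _ bot_ne_top).ge (hxs.mem_maximalIdeal List.mem_cons_self))
      ((Ideal.Quotient.isDomain_iff_prime _).1 this) hmin

lemma isWeaklyRegular (h : IsRegularSystemOfParameters rs) : IsWeaklyRegular R rs := by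
  induction hlen : rs.length generalizing R rs with
  | zero =>
    obtain rfl := List.eq_nil_of_length_eq_zero hlen
    exact .nil R R
  | succ d ih =>
    obtain ⟨r, rs, rfl⟩ := List.exists_cons_of_length_eq_add_one hlen
    have := h.isDomain
    have := h.isLocalRing_quotient
    have hr : IsSMulRegular R r := .of_ne_zero h.ne_zero
    have htail : IsWeaklyRegular (R ⧸ Ideal.span {r}) rs :=
      (isWeaklyRegular_map_algebraMap_iff (R ⧸ Ideal.span {r}) _ rs).1
        (ih h.quotient (by rw [List.length_map, Nat.succ.inj hlen]))
    let e : (R ⧸ Ideal.span {r}) ≃ₗ[R] QuotSMulTop r R :=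
      Submodule.quotEquivOfEq _ _ (by simp [← Submodule.ideal_span_singleton_smul])
    exact .cons hr ((e.isWeaklyRegular_congr rs).1 htail)

end IsRegularSystemOfParameters

end RegularLocalRing

section ProjectiveDimension

variable {C D : Type*} [Category* C] [Abelian C] [Category* D] [Abelian D]

lemma shortExact_cokernelDesc {S : ShortComplex C} (hS : S.Exact) :
    (ShortComplex.mk (cokernel.desc S.f S.g S.zero) (cokernel.π S.g) (by
      simp [← cancel_epi (cokernel.π S.f)])).ShortExact where
  mono_f := hS.mono_cokernelDesc
  exact := ShortComplex.exact_of_g_is_cokernel _ <|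
    CokernelCofork.IsColimit.ofπ _ _
      (fun φ hφ ↦ cokernel.desc S.g φ (by
        rw [← cokernel.π_desc S.f S.g S.zero, Category.assoc, hφ, comp_zero]))
      (fun φ hφ ↦ cokernel.π_desc _ _ _)
      (fun φ hφ m hm ↦ by simp [← cancel_epi (cokernel.π S.g), hm])

lemma exists_comp_comp_eq_self {X Y : C} (g : X ⟶ Y) [Projective Y] [Projective (cokernel g)] :
    ∃ s : Y ⟶ X, g ≫ s ≫ g = g := by
  let σ := Projective.factorThru (𝟙 (cokernel g)) (cokernel.π g)
  have hσ : σ ≫ cokernel.π g = 𝟙 _ := Projective.factorThru_comp _ _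
  have hker : (𝟙 Y - cokernel.π g ≫ σ) ≫ cokernel.π g = 0 := by simp [hσ]
  let s := (ShortComplex.exact_cokernel g).liftFromProjective _ hker
  have hs : s ≫ g = 𝟙 Y - cokernel.π g ≫ σ :=
    (ShortComplex.exact_cokernel g).liftFromProjective_comp _ hker
  exact ⟨s, by simp [hs]⟩

lemma exact_map_of_projective_cokernel (F : C ⥤ D) [F.Additive] {S : ShortComplex C}
    (hS : S.Exact) [Projective S.X₂] [Projective S.X₃] [Projective (cokernel S.g)] :
    (S.map F).Exact := by
  obtain ⟨s, hs⟩ := exists_comp_comp_eq_self S.g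
  have hker : (𝟙 S.X₂ - S.g ≫ s) ≫ S.g = 0 := by simp [hs]
  let t := hS.liftFromProjective _ hker
  have ht : t ≫ S.f = 𝟙 S.X₂ - S.g ≫ s := hS.liftFromProjective_comp _ hker
  rw [ShortComplex.exact_iff_exact_up_to_refinements]
  intro T (x : T ⟶ F.obj S.X₂) (hx : x ≫ F.map S.g = 0)
  have hlift : x = (x ≫ F.map t) ≫ F.map S.f :=
    calc x = x ≫ F.map (𝟙 S.X₂ - S.g ≫ s) := by simp [Functor.map_sub, reassoc_of% hx]
      _ = (x ≫ F.map t) ≫ F.map S.f := by rw [← ht, F.map_comp, Category.assoc]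
  exact ⟨T, 𝟙 T, inferInstance, x ≫ F.map t, (Category.id_comp x).trans hlift⟩

lemma hasProjectiveDimensionLE_cokernel_d {X : C} (P : ProjectiveResolution X) (n k : ℕ)
    [h : HasProjectiveDimensionLE X (n + k)] :
    HasProjectiveDimensionLE (cokernel (P.complex.d (n + 1) n)) k := by
  induction n generalizing k with
  | zero =>
    rw [zero_add] at h
    let e : cokernel (P.complex.d 1 0) ≅ X :=
      (cokernelIsCokernel _).coconePointUniqueUpToIso P.isColimitCokernelCofork
    exact hasProjectiveDimensionLT_of_iso e.symm _
  | succ n ih =>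
    have : HasProjectiveDimensionLE X (n + (k + 1)) := by rwa [← Nat.succ_add_eq_add_succ]
    exact ((shortExact_cokernelDesc (P.exact_succ n)).hasProjectiveDimensionLT_X₃_iff k
      (P.projective n)).1 (ih (k + 1))

lemma isZero_leftDerived_obj_of_hasProjectiveDimensionLE [HasProjectiveResolutions C]
    (F : C ⥤ D) [F.Additive] (X : C) (n : ℕ) [HasProjectiveDimensionLE X n] :
    IsZero ((F.leftDerived (n + 1)).obj X) := by
  let P := projectiveResolution X
  have := hasProjectiveDimensionLE_cokernel_d P n 0
  have := (projective_iff_hasProjectiveDimensionLE_zero _).2 this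
  have hexact := exact_map_of_projective_cokernel F (P.exact_succ n)
  refine IsZero.of_iso ?_ (P.isoLeftDerivedObj F (n + 1))
  refine (HomologicalComplex.exactAt_iff_isZero_homology _ _).1 ?_
  exact (HomologicalComplex.exactAt_iff' _ (n + 2) (n + 1) n (by simp only [ChainComplex.prev]; rfl)
    (by simp)).2 hexact

end ProjectiveDimension

section TorNonvanishing

open MonoidalCategory RingTheory.Sequence

lemma mono_leftDerived_app {C D : Type*} [Category* C] [Abelian C] [HasProjectiveResolutions C]
    [Category* D] [Abelian D] {F G H : C ⥤ D} [F.Additive] [G.Additive] [H.Additive]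
    {α : F ⟶ G} {β : G ⟶ H} {w : α ≫ β = 0}
    (hexact : ∀ (P : C) [Projective P],
      ((ShortComplex.mk α β w).map ((evaluation C D).obj P)).ShortExact)
    (X : C) (n : ℕ) (h : IsZero ((H.leftDerived (n + 1)).obj X)) :
    Mono ((NatTrans.leftDerived α n).app X) := by
  let P := projectiveResolution X
  let K : ShortComplex (ChainComplex D ℕ) :=
    ShortComplex.mk ((NatTrans.mapHomologicalComplex α _).app P.complex)
      ((NatTrans.mapHomologicalComplex β _).app P.complex) (by
        ext i
        exact congr_app w (P.complex.X i))
  have hK : K.ShortExact :=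
    HomologicalComplex.shortExact_of_degreewise_shortExact K fun i ↦ hexact (P.complex.X i)
  have hzero : IsZero (K.X₃.homology (n + 1)) := h.of_iso (P.isoLeftDerivedObj H (n + 1)).symm
  have hmono : Mono ((HomologicalComplex.homologyFunctor D _ n).map K.f) :=
    (hK.homology_exact₁ (n + 1) n (by simp)).mono_g (hzero.eq_zero_of_src _)
  rw [P.leftDerived_app_eq]
  infer_instance

lemma mono_tor_map_app {A : Type u} [CommRing A] {S : ShortComplex (ModuleCat.{u} A)}
    (hS : S.ShortExact) (Y : ModuleCat.{u} A) (n : ℕ)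
    (h : IsZero (((Tor (ModuleCat A) (n + 1)).obj S.X₃).obj Y)) :
    Mono (((Tor (ModuleCat A) n).map S.f).app Y) := by
  refine mono_leftDerived_app (β := (tensoringLeft _).map S.g)
    (w := by rw [← Functor.map_comp, S.zero, Functor.map_zero]) (fun P _ ↦ ?_) Y n h
  have : Module.Projective A P := (IsProjective.iff_projective P).2 inferInstance
  exact hS.map_of_exact (tensorRight P)

lemma tor_map_smul_id_app {R C : Type*} [Semiring R] [Category* C] [Abelian C] [Linear R C]
    [MonoidalCategory C] [MonoidalPreadditive C] [MonoidalLinear R C] [HasProjectiveResolutions C]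
    (r : R) (X Y : C) (n : ℕ) :
    ((Tor C n).map (r • 𝟙 X)).app Y = ((Tor C n).obj X).map (r • 𝟙 Y) := by
  let P := projectiveResolution Y
  have hsingle : (ChainComplex.single₀ C).map (r • 𝟙 Y) = r • 𝟙 _ := by
    ext
    rw [ChainComplex.single₀_map_f_zero]
    rfl
  have hlift : (r • 𝟙 P.complex) ≫ P.π = P.π ≫ (ChainComplex.single₀ C).map (r • 𝟙 Y) := by
    simp [hsingle]
  have hcomplex :
      (NatTrans.mapHomologicalComplex ((tensoringLeft C).map (r • 𝟙 X)) _).app P.complex =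
        (((tensoringLeft C).obj X).mapHomologicalComplex _).map (r • 𝟙 P.complex) := by
    ext i
    have hterm : (r • 𝟙 X) ▷ P.complex.X i = X ◁ (r • 𝟙 (P.complex.X i)) := by simp
    exact hterm
  exact (P.leftDerived_app_eq _ n).trans <|
    hcomplex ▸ (Functor.leftDerived_map_eq _ n _ _ hlift).symm

lemma leftDerived_map_zero {C D : Type*} [Category* C] [Abelian C] [HasProjectiveResolutions C]
    [Category* D] [Abelian D] (F : C ⥤ D) [F.Additive] (n : ℕ) {X Y : C} :
    (F.leftDerived n).map (0 : X ⟶ Y) = 0 := by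
  rw [F.leftDerived_map_eq (P := projectiveResolution X) (Q := projectiveResolution Y) n 0 0
    (by simp), Functor.map_zero, zero_comp, comp_zero]

variable {A : Type u} [CommRing A]

lemma not_isZero_tor_quotSMulTop {X Y : ModuleCat.{u} A} {r : A} (hX : IsSMulRegular X r)
    (hY : r ∈ Module.annihilator A Y) {n : ℕ} (h : ¬ IsZero (((Tor (ModuleCat A) n).obj X).obj Y)) :
    ¬ IsZero (((Tor (ModuleCat A) (n + 1)).obj (ModuleCat.of A (QuotSMulTop r X))).obj Y) := by
  intro hzero
  have hmono : Mono (((Tor (ModuleCat A) n).map (r • 𝟙 X)).app Y) :=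
    mono_tor_map_app hX.smulShortComplex_shortExact Y n hzero
  have hrY : r • 𝟙 Y = 0 := by
    ext y
    exact Module.mem_annihilator.1 hY y
  have hrTor : ((Tor (ModuleCat A) n).map (r • 𝟙 X)).app Y = 0 := by
    rw [tor_map_smul_id_app, hrY]
    exact leftDerived_map_zero _ n
  exact h (IsZero.of_mono_eq_zero _ hrTor)

lemma not_isZero_tor_quotient_ofList {X Y : ModuleCat.{u} A} {rs : List A}
    (hX : IsWeaklyRegular X rs) (hY : Ideal.ofList rs ≤ Module.annihilator A Y) {n : ℕ}
    (h : ¬ IsZero (((Tor (ModuleCat A) n).obj X).obj Y)) :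
    ¬ IsZero (((Tor (ModuleCat A) (n + rs.length)).obj
      (ModuleCat.of A (X ⧸ (Ideal.ofList rs • ⊤ : Submodule A X)))).obj Y) := by
  induction rs generalizing X n with
  | nil =>
    have hbot : (Ideal.ofList ([] : List A) • ⊤ : Submodule A X) = ⊥ := by
      rw [Ideal.ofList_nil, Submodule.bot_smul]
    let e := (Submodule.quotEquivOfEqBot _ hbot).toModuleIso
    exact (((Tor (ModuleCat A) n).mapIso e).app Y).isZero_iff.not.2 h
  | cons r rs ih =>
    rw [isWeaklyRegular_cons_iff] at hX
    rw [Ideal.ofList_cons, sup_le_iff, Ideal.span_singleton_le_iff_mem] at hY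
    let e : ModuleCat.of A (X ⧸ (Ideal.ofList (r :: rs) • ⊤ : Submodule A X)) ≅
        ModuleCat.of A (QuotSMulTop r X ⧸ (Ideal.ofList rs • ⊤ : Submodule A (QuotSMulTop r X))) :=
      (Submodule.quotOfListConsSMulTopEquivQuotSMulTopInner X r rs).toModuleIso
    have htail := ih (X := ModuleCat.of A (QuotSMulTop r X)) hX.2 hY.2
      (not_isZero_tor_quotSMulTop hX.1 hY.1 h)
    rw [List.length_cons, Nat.add_comm rs.length 1, ← Nat.add_assoc]
    exact (((Tor (ModuleCat A) _).mapIso e).app Y).isZero_iff.not.2 htail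

lemma not_isZero_tor_zero (Y : ModuleCat.{u} A) [Nontrivial Y] :
    ¬ IsZero (((Tor (ModuleCat A) 0).obj (ModuleCat.of A A)).obj Y) := by
  let e : ((Tor (ModuleCat A) 0).obj (ModuleCat.of A A)).obj Y ≅ Y :=
    ((tensoringLeft (ModuleCat A)).obj (ModuleCat.of A A)).leftDerivedZeroIsoSelf.app Y ≪≫ λ_ Y
  rw [e.isZero_iff, ModuleCat.isZero_iff_subsingleton, not_subsingleton_iff_nontrivial]
  infer_instance

end TorNonvanishing

section ResidueField

open IsLocalRing RingTheory.Sequence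

lemma colon_bot_singleton_eq_ker_toSpanSingleton {R M : Type*} [CommRing R] [AddCommGroup M]
    [Module R M] (x : M) :
    (⊥ : Submodule R M).colon {x} = LinearMap.ker (LinearMap.toSpanSingleton R M x) := by
  ext r
  simp only [Submodule.mem_colon_singleton, Submodule.mem_bot, LinearMap.mem_ker,
    LinearMap.toSpanSingleton_apply]

lemma maximalIdeal_mem_associatedPrimes (R M : Type*) [CommRing R] [IsLocalRing R]
    [AddCommGroup M] [Module R M] [IsArtinian R M] [Nontrivial M] :
    maximalIdeal R ∈ associatedPrimes R M := by
  obtain ⟨N, hN⟩ := IsAtomic.exists_atom (Submodule R M)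
  have : IsSimpleModule R N := isSimpleModule_iff_isAtom.2 hN
  have := IsSimpleModule.nontrivial R N
  obtain ⟨x, hx⟩ := exists_ne (0 : N)
  have hcolon : (⊥ : Submodule R N).colon {x} = maximalIdeal R := by
    rw [colon_bot_singleton_eq_ker_toSpanSingleton]
    exact eq_maximalIdeal (IsSimpleModule.ker_toSpanSingleton_isMaximal R hx)
  have hass : IsAssociatedPrime (maximalIdeal R) N :=
    ⟨inferInstance, x, by rw [hcolon, Ideal.IsPrime.radical inferInstance]⟩
  exact hass.map_of_injective N.subtype N.injective_subtype

lemma exists_mono_quotient_of_mem_associatedPrimes {A : Type u} [CommRing A] [IsNoetherianRing A]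
    {p : Ideal A} {M : ModuleCat.{u} A} (hp : p ∈ associatedPrimes A M) :
    ∃ f : ModuleCat.of A (A ⧸ p) ⟶ M, Mono f := by
  obtain ⟨-, x, rfl⟩ := isAssociatedPrime_iff.1 hp
  have hker := colon_bot_singleton_eq_ker_toSpanSingleton (R := A) x
  refine ⟨ModuleCat.ofHom (Submodule.liftQ _ (LinearMap.toSpanSingleton A M x) hker.le), ?_⟩
  rw [ModuleCat.mono_iff_injective]
  exact LinearMap.ker_eq_bot.1 (Submodule.ker_liftQ_eq_bot _ _ _ hker.ge)

namespace IsRegularSystemOfParameters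

variable {A : Type u} [CommRing A] [IsLocalRing A] {rs : List A}

/-- The residue field as the quotient by a regular system of parameters, written in the form
`A ⧸ (rs) • ⊤` in which Mathlib's results on regular sequences produce it. -/
noncomputable def residueFieldIso (h : IsRegularSystemOfParameters rs) :
    ModuleCat.of A (ResidueField A) ≅
      ModuleCat.of A (A ⧸ (Ideal.ofList rs • ⊤ : Submodule A A)) :=
  (Submodule.quotEquivOfEq (maximalIdeal A) _ (by
    rw [h.ofList_eq, smul_eq_mul, Ideal.mul_top])).toModuleIso

variable [IsNoetherianRing A]

lemma hasProjectiveDimensionLE_residueField (h : IsRegularSystemOfParameters rs) :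
    HasProjectiveDimensionLE (ModuleCat.of A (ResidueField A)) rs.length := by
  rw [← projectiveDimension_le_iff, projectiveDimension_eq_of_iso h.residueFieldIso,
    ModuleCat.projectiveDimension_quotient_eq_add_length_of_isWeaklyRegular (ModuleCat.of A A) rs
      h.isWeaklyRegular fun _ ↦ h.mem_maximalIdeal,
    ModuleCat.projectiveDimension_eq_zero_of_projective, zero_add]

lemma not_isZero_tor_residueField (h : IsRegularSystemOfParameters rs) :
    ¬ IsZero (((Tor (ModuleCat A) rs.length).obj (ModuleCat.of A (ResidueField A))).obj
      (ModuleCat.of A (ResidueField A))) := by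
  have hann : Ideal.ofList rs ≤ Module.annihilator A (ModuleCat.of A (ResidueField A)) :=
    h.ofList_eq.trans_le Ideal.annihilator_quotient.ge
  have htor := not_isZero_tor_quotient_ofList (X := ModuleCat.of A A) h.isWeaklyRegular hann
    (not_isZero_tor_zero (ModuleCat.of A (ResidueField A)))
  rw [Nat.zero_add] at htor
  exact (((Tor (ModuleCat A) _).mapIso h.residueFieldIso).app _).isZero_iff.not.2 htor

lemma mono_tor_map_app_residueField (h : IsRegularSystemOfParameters rs) {X Y : ModuleCat.{u} A}
    (f : X ⟶ Y) [Mono f] :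
    Mono (((Tor (ModuleCat A) rs.length).map f).app (ModuleCat.of A (ResidueField A))) := by
  have := h.hasProjectiveDimensionLE_residueField
  have hS : (ShortComplex.mk f (cokernel.π f) (cokernel.condition f)).ShortExact :=
    { exact := ShortComplex.exact_cokernel f }
  exact mono_tor_map_app hS _ _ (isZero_leftDerived_obj_of_hasProjectiveDimensionLE _ _ _)

end IsRegularSystemOfParameters

end ResidueField

theorem tor_dim_ne_zero_of_finite_length_general {A : Type u} [CommRing A] [IsNoetherianRing A]
    [IsLocalRing A] {d : ℕ} (hdim : ringKrullDim A = d)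
    (hreg : ∃ a : Fin d → A, Ideal.span (Set.range a) = IsLocalRing.maximalIdeal A)
    {M : Type u} [AddCommGroup M] [Module A M]
    (hM : IsLocalRing.maximalIdeal A ∈ associatedPrimes A M) :
    ¬ IsZero (((Tor (ModuleCat A) d).obj (ModuleCat.of A M)).obj
        (ModuleCat.of A (IsLocalRing.ResidueField A))) := by
  obtain ⟨a, ha⟩ := hreg
  have hrs : IsRegularSystemOfParameters (List.ofFn a) :=
    ⟨by simpa only [Ideal.ofList, List.mem_ofFn] using! ha, by rw [List.length_ofFn, hdim]⟩
  obtain ⟨f, hf⟩ : ∃ f : ModuleCat.of A (IsLocalRing.ResidueField A) ⟶ ModuleCat.of A M, Mono f :=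
    exists_mono_quotient_of_mem_associatedPrimes hM
  have hmono := hrs.mono_tor_map_app_residueField f
  have htor := hrs.not_isZero_tor_residueField
  rw [List.length_ofFn] at hmono htor
  exact fun hzero ↦ htor (hzero.of_mono (((Tor (ModuleCat A) d).map f).app _))

/-- Let `(A, m, k)` be a regular local ring of Krull dimension `d` (regularity being
expressed by the maximal ideal admitting `d` generators) and let `M` be a nonzero finitely
generated `A`-module of finite length. Then `Tor_d^A(M, k) ≠ 0`. -/
theorem tor_dim_ne_zero_of_finite_length (A : Type) [CommRing A] [IsNoetherianRing A]
    [IsLocalRing A] (d : ℕ) (hdim : ringKrullDim A = d)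
    (hreg : ∃ a : Fin d → A, Ideal.span (Set.range a) = IsLocalRing.maximalIdeal A)
    (M : Type) [AddCommGroup M] [Module A M] [Module.Finite A M] [Nontrivial M]
    (hlen : IsFiniteLength A M) :
    ¬ IsZero (((Tor (ModuleCat A) d).obj (ModuleCat.of A M)).obj
        (ModuleCat.of A (IsLocalRing.ResidueField A))) := by
  have : IsArtinian A M := (isFiniteLength_iff_isNoetherian_isArtinian.1 hlen).2
  exact tor_dim_ne_zero_of_finite_length_general hdim hreg (maximalIdeal_mem_associatedPrimes A M)
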